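/- Let j ≥ 1 and let D_1, …, D_j be digraphs such that |V(D_i)| = i for each i and such that the undirected graph underlying each D_i is connected. Then the ℚ-subalgebra of NSym generated by X_{D_1}, X_{D_2}, …, X_{D_j} equals the ℚ-linear span of {Ψ_α : α a composition all of whose parts are ≤ j} (including Ψ_{()} = 1). In particular, ℚ⟨X_{D_1}, …, X_{D_j}⟩ = ℚ⟨Ψ_1, Ψ_2, …, Ψ_j⟩. -/

import Mathlib

/-!
Digraph conventions: a digraph `D` on a finite vertex type `V` is given by an arc set
`E : Finset (V × V)` all of whose arcs `(u, v)` satisfy `u ≠ v`.  For an arc set `S`,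
`arcGraph S` is the simple graph with edge set `S' = {{u,v} : (u,v) ∈ S}`.
-/

open scoped Classical

noncomputable section

/-- The undirected simple graph underlying an arc set `S`: `u` and `v` are adjacent
iff `u ≠ v` and (`(u,v) ∈ S` or `(v,u) ∈ S`). -/
def arcGraph {V : Type} (S : Finset (V × V)) : SimpleGraph V :=
  SimpleGraph.fromRel (fun u v => (u, v) ∈ S)

/-- The set of connected components (as vertex subsets) of the spanning subgraph
`(V, S')`. -/
def comps {V : Type} [Fintype V] [DecidableEq V] (S : Finset (V × V)) : Finset (Finset V) :=
  Finset.univ.image (fun v => Finset.univ.filter (fun w => (arcGraph S).Reachable v w))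

/-- Outdegree of a vertex with respect to an arc set: the number of arcs with first
coordinate `w`. -/
def od {V : Type} [DecidableEq V] (E : Finset (V × V)) (w : V) : ℤ :=
  (E.filter (fun a => a.1 = w)).card

/-- Indegree of a vertex with respect to an arc set: the number of arcs with second
coordinate `w`. -/
def indeg {V : Type} [DecidableEq V] (E : Finset (V × V)) (w : V) : ℤ :=
  (E.filter (fun a => a.2 = w)).card

/-- Total degree of a vertex subset `W`: the sum of the outdegrees of its elements
minus the sum of their indegrees. -/
def td {V : Type} [DecidableEq V] (E : Finset (V × V)) (W : Finset V) : ℤ :=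
  (∑ w ∈ W, od E w) - ∑ w ∈ W, indeg E w

/-- The increasing word of the elements of the finite set `C` with respect to the
linear order `r`. -/
def word {V : Type} (r : LinearOrder V) (C : Finset V) : List V :=
  letI := r
  C.sort (· ≤ ·)

/-- The relation `⊳^r` on vertex subsets: `tri E r C C'` holds iff `td C > td C'`, or
`td C = td C'` and `|C| > |C'|`, or `td C = td C'` and `|C| = |C'|` and the increasing
word of `C` is lexicographically strictly greater than that of `C'` with respect to `r`. -/
def tri {V : Type} [DecidableEq V] (E : Finset (V × V)) (r : LinearOrder V)
    (C C' : Finset V) : Prop :=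
  td E C > td E C' ∨
    (td E C = td E C' ∧ C.card > C'.card) ∨
      (td E C = td E C' ∧ C.card = C'.card ∧ List.Lex r.lt (word r C') (word r C))

/-- The connected components of `(V, S')`, listed in decreasing `⊳^r`-order. -/
def sortedComps {V : Type} [Fintype V] [DecidableEq V]
    (E S : Finset (V × V)) (r : LinearOrder V) : List (Finset V) :=
  (comps S).toList.mergeSort (fun C C' => decide (tri E r C C' ∨ C = C'))

/-- The composition `α^r_D(S)`: the sizes of the connected components of `(V, S')`,
listed in decreasing `⊳^r`-order. -/
def alphaComp {V : Type} [Fintype V] [DecidableEq V]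
    (E S : Finset (V × V)) (r : LinearOrder V) : List ℕ :=
  (sortedComps E S r).map Finset.card

/-- `NSym`, the algebra of noncommutative symmetric functions over `ℚ`, modeled as the
free associative `ℚ`-algebra on countably many noncommuting generators; the generator
indexed by `n : ℕ` is the noncommutative power sum `Ψ_{n+1}`, so that `NSym` is free
on `Ψ_1, Ψ_2, …`, with `Ψ_n` of degree `n`. -/
abbrev NSym : Type := FreeAlgebra ℚ ℕ

/-- The noncommutative power sum generator `Ψ_n` (intended for `n ≥ 1`). -/
def Psi (n : ℕ) : NSym := FreeAlgebra.ι ℚ (n - 1)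

/-- `Ψ_α` for a composition `α = (α_1, …, α_ℓ)`: the product `Ψ_{α_1} Ψ_{α_2} ⋯ Ψ_{α_ℓ}`,
with `Ψ_{()} = 1`. -/
def PsiComp (l : List ℕ) : NSym := (l.map Psi).prod

/-- The chromatic noncommutative symmetric function of the digraph with arc set `E`,
computed using the linear order `r` on the vertices:
`X_D = Σ_{S ⊆ E} (−1)^{|S|} Ψ_{α(S)}`. -/
def XD {V : Type} [Fintype V] [DecidableEq V] (E : Finset (V × V)) (r : LinearOrder V) :
    NSym :=
  ∑ S ∈ E.powerset, ((-1 : ℚ) ^ S.card) • PsiComp (alphaComp E S r)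

theorem reach_edge {V : Type} (H : SimpleGraph V) (u v a b : V)
    (h : (H ⊔ SimpleGraph.edge u v).Reachable a b) :
    H.Reachable a b ∨ (H.Reachable a u ∧ H.Reachable v b) ∨
      (H.Reachable a v ∧ H.Reachable u b) := by
  obtain ⟨p⟩ := h
  induction p with
  | nil => exact Or.inl (SimpleGraph.Reachable.refl _)
  | @cons x y z hxy p ih =>
    rw [SimpleGraph.sup_adj, SimpleGraph.edge_adj] at hxy
    rcases hxy with hxy | ⟨⟨rfl, rfl⟩ | ⟨rfl, rfl⟩, _⟩
    · have hr := hxy.reachable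
      rcases ih with h | ⟨h1, h2⟩ | ⟨h1, h2⟩
      · exact Or.inl (hr.trans h)
      · exact Or.inr (Or.inl ⟨hr.trans h1, h2⟩)
      · exact Or.inr (Or.inr ⟨hr.trans h1, h2⟩)
    · rcases ih with h | ⟨h1, h2⟩ | ⟨h1, h2⟩
      · exact Or.inr (Or.inl ⟨SimpleGraph.Reachable.refl _, h⟩)
      · exact Or.inr (Or.inl ⟨SimpleGraph.Reachable.refl _, h2⟩)
      · exact Or.inl h2
    · rcases ih with h | ⟨h1, h2⟩ | ⟨h1, h2⟩
      · exact Or.inr (Or.inr ⟨SimpleGraph.Reachable.refl _, h⟩)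
      · exact Or.inl h2
      · exact Or.inr (Or.inr ⟨SimpleGraph.Reachable.refl _, h2⟩)

theorem conn_of_edge {V : Type} (K : SimpleGraph V) (u v : V) (h : K.Reachable u v)
    (hc : (K ⊔ SimpleGraph.edge u v).Connected) : K.Connected := by
  have := hc.nonempty
  refine ⟨fun a b => ?_⟩
  rcases reach_edge K u v a b (hc.preconnected a b) with h0 | ⟨h1, h2⟩ | ⟨h1, h2⟩
  · exact h0
  · exact (h1.trans h).trans h2
  · exact (h1.trans h.symm).trans h2

theorem arcGraph_insert {V : Type} [DecidableEq V] (e : V × V) (S : Finset (V × V)) :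
    arcGraph (insert e S) = SimpleGraph.edge e.1 e.2 ⊔ arcGraph S := by
  ext a b
  obtain ⟨u, v⟩ := e
  simp only [arcGraph, SimpleGraph.fromRel_adj, SimpleGraph.sup_adj, SimpleGraph.edge_adj,
    Finset.mem_insert, Prod.mk.injEq]
  grind

theorem arcGraph_empty {V : Type} : arcGraph (∅ : Finset (V × V)) = ⊥ := by
  ext a b
  simp [arcGraph]

def FF {V : Type} [DecidableEq V] (H : SimpleGraph V) (E : Finset (V × V)) : ℚ :=
  ∑ S ∈ E.powerset, if (H ⊔ arcGraph S).Connected then (-1 : ℚ) ^ S.card else 0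

theorem FF_insert {V : Type} [DecidableEq V] (H : SimpleGraph V) (E : Finset (V × V))
    (e : V × V) (he : e ∉ E) :
    FF H (insert e E) = FF H E - FF (H ⊔ SimpleGraph.edge e.1 e.2) E := by
  unfold FF
  rw [Finset.sum_powerset_insert he, sub_eq_add_neg, ← Finset.sum_neg_distrib]
  congr 1
  refine Finset.sum_congr rfl fun S hS => ?_
  have : e ∉ S := fun h => he (Finset.mem_powerset.1 hS h)
  rw [arcGraph_insert, Finset.card_insert_of_notMem this, sup_assoc, pow_succ]
  split_ifs <;> ring

def ecard {V : Type} [Fintype V] (H : SimpleGraph V) : ℕ := H.edgeFinset.card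

theorem FF_sign {V : Type} [Fintype V] [DecidableEq V] (E : Finset (V × V)) :
    ∀ H : SimpleGraph V, H.IsAcyclic →
      (0 ≤ (-1 : ℚ) ^ (Fintype.card V + 1 + ecard H) * FF H E) ∧
      ((∀ e ∈ E, ¬ H.Reachable e.1 e.2) → (H ⊔ arcGraph E).Connected →
        0 < (-1 : ℚ) ^ (Fintype.card V + 1 + ecard H) * FF H E) := by
  induction E using Finset.induction_on with
  | empty =>
    intro H hH
    have key : H.Connected →
        0 < (-1 : ℚ) ^ (Fintype.card V + 1 + ecard H) * FF H ∅ := by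
      intro hc
      have ht : H.IsTree := ⟨hc, hH⟩
      have : ecard H + 1 = Fintype.card V := ht.card_edgeFinset
      have hev : Even (Fintype.card V + 1 + ecard H) := by
        rw [← this]; exact ⟨ecard H + 1, by ring⟩
      rw [hev.neg_one_pow]
      simp [FF, arcGraph_empty, hc]
    refine ⟨?_, fun _ h => key (by simpa [arcGraph_empty] using h)⟩
    by_cases hc : H.Connected
    · exact (key hc).le
    · simp [FF, arcGraph_empty, hc]
  | insert e E he ih =>
    intro H hH
    obtain ⟨u, v⟩ := e
    rw [FF_insert H E _ he]
    by_cases hr : H.Reachable u v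
    · refine ⟨?_, fun h => absurd hr (h (u, v) (by simp))⟩
      have : FF (H ⊔ SimpleGraph.edge u v) E = FF H E := by
        unfold FF
        refine Finset.sum_congr rfl fun S _ => ?_
        have hiff : (H ⊔ SimpleGraph.edge u v ⊔ arcGraph S).Connected ↔
            (H ⊔ arcGraph S).Connected := by
          constructor
          · intro h
            refine conn_of_edge _ u v (hr.mono le_sup_left) ?_
            rwa [sup_right_comm]
          · intro h
            exact h.mono (sup_le_sup_right le_sup_left _)
        split_ifs <;> tauto
      simp [this]
    · have hne : u ≠ v := by rintro rfl; exact hr (SimpleGraph.Reachable.refl _)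
      have hna : ¬ H.Adj u v := fun h => hr h.reachable
      have hcard : ecard (H ⊔ SimpleGraph.edge u v) = ecard H + 1 := by
        unfold ecard
        convert! H.card_edgeFinset_sup_edge hna hne
      obtain ⟨n1, p1⟩ := ih H hH
      obtain ⟨n2, p2⟩ := ih _ (hH.sup_edge_of_not_reachable hr)
      rw [hcard] at n2 p2
      rw [← add_assoc, pow_succ] at n2 p2
      refine ⟨by simp only; linarith, fun hl hc => ?_⟩
      simp only
      rw [arcGraph_insert, ← sup_assoc] at hc
      simp only at hc
      by_cases hK : (H ⊔ arcGraph E).Connected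
      · have := p1 (fun e h => hl e (Finset.mem_insert_of_mem h)) hK
        linarith
      · have := p2 (fun f hf hrf => ?_) hc
        · linarith
        · apply hK
          have hf0 := hl f (Finset.mem_insert_of_mem hf)
          have hfa : (H ⊔ arcGraph E).Reachable f.1 f.2 := by
            have : f.1 ≠ f.2 := fun h => hf0 (by rw [h])
            apply SimpleGraph.Adj.reachable
            right
            exact (SimpleGraph.fromRel_adj _ _ _).2 ⟨this, Or.inl hf⟩
          have hle : H ≤ H ⊔ arcGraph E := le_sup_left
          refine conn_of_edge _ u v ?_ (by rwa [sup_right_comm])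
          rcases reach_edge _ _ _ _ _ hrf with h | ⟨h1, h2⟩ | ⟨h1, h2⟩
          · exact absurd h hf0
          · exact ((h1.mono hle).symm.trans hfa).trans (h2.mono hle).symm
          · exact ((h2.mono hle).trans hfa.symm).trans (h1.mono hle)

theorem FF_ne_zero {V : Type} [Fintype V] [DecidableEq V] (E : Finset (V × V))
    (hE : ∀ e ∈ E, e.1 ≠ e.2) (hc : (arcGraph E).Connected) : FF ⊥ E ≠ 0 := by
  intro h
  have := (FF_sign E ⊥ SimpleGraph.isAcyclic_bot).2
    (fun e he => by simpa using hE e he) (by simpa using hc)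
  simp [h] at this

theorem alphaComp_conn {V : Type} [Fintype V] [DecidableEq V] (E S : Finset (V × V))
    (r : LinearOrder V) (h : (arcGraph S).Connected) :
    alphaComp E S r = [Fintype.card V] := by
  have : comps S = {Finset.univ} := by
    have := h.nonempty
    ext C
    simp [comps, h.preconnected _ _, eq_comm]
  simp [alphaComp, sortedComps, this]

theorem alphaComp_mem {V : Type} [Fintype V] [DecidableEq V] [Nonempty V] (E S : Finset (V × V))
    (r : LinearOrder V) (h : ¬ (arcGraph S).Connected) :
    ∀ a ∈ alphaComp E S r, 1 ≤ a ∧ a < Fintype.card V := by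
  intro a ha
  simp only [alphaComp, sortedComps, List.mem_map, List.mem_mergeSort, Finset.mem_toList,
    comps, Finset.mem_image, Finset.mem_univ, true_and] at ha
  obtain ⟨C, ⟨v, rfl⟩, rfl⟩ := ha
  constructor
  · exact Finset.card_pos.2 ⟨v, by simp⟩
  · rw [Finset.card_lt_iff_ne_univ]
    intro hu
    apply h
    have hv : ∀ w, (arcGraph S).Reachable v w := fun w => by
      have : w ∈ Finset.univ.filter (fun w => (arcGraph S).Reachable v w) := by simp [hu]
      simpa using this
    exact ⟨fun a b => (hv a).symm.trans (hv b)⟩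

theorem PsiComp_mem (A : Subalgebra ℚ NSym) (l : List ℕ) (h : ∀ a ∈ l, Psi a ∈ A) :
    PsiComp l ∈ A := by
  apply list_prod_mem
  intro x hx
  obtain ⟨a, ha, rfl⟩ := List.mem_map.1 hx
  exact h a ha

theorem XD_decomp {V : Type} [Fintype V] [DecidableEq V] [Nonempty V] (E : Finset (V × V))
    (r : LinearOrder V) (A : Subalgebra ℚ NSym)
    (hA : ∀ a, 1 ≤ a → a < Fintype.card V → Psi a ∈ A) :
    XD E r - FF ⊥ E • Psi (Fintype.card V) ∈ A := by
  unfold XD FF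
  rw [Finset.sum_smul, ← Finset.sum_sub_distrib]
  refine sum_mem fun S _ => ?_
  rw [bot_sup_eq]
  split_ifs with h
  · rw [alphaComp_conn E S r h]
    simp [PsiComp]
  · rw [zero_smul, sub_zero]
    refine A.smul_mem (PsiComp_mem A _ fun a ha => ?_) _
    obtain ⟨h1, h2⟩ := alphaComp_mem E S r h a ha
    exact hA a h1 h2

theorem adjoin_Psi_span (j : ℕ) :
    Subalgebra.toSubmodule (Algebra.adjoin ℚ {x : NSym | ∃ m : ℕ, 1 ≤ m ∧ m ≤ j ∧ x = Psi m}) =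
    Submodule.span ℚ {x : NSym | ∃ l : List ℕ, (∀ a ∈ l, 1 ≤ a ∧ a ≤ j) ∧ x = PsiComp l} := by
  apply le_antisymm
  · rw [Algebra.adjoin_eq_span]
    apply Submodule.span_mono
    intro x hx
    induction hx using Submonoid.closure_induction with
    | mem x hx =>
      obtain ⟨m, h1, h2, rfl⟩ := hx
      exact ⟨[m], by simp [h1, h2], by simp [PsiComp]⟩
    | one => exact ⟨[], by simp, by simp [PsiComp]⟩
    | mul x y _ _ hx hy =>
      obtain ⟨l, hl, rfl⟩ := hx
      obtain ⟨k, hk, rfl⟩ := hy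
      refine ⟨l ++ k, ?_, by simp [PsiComp]⟩
      intro a ha
      rcases List.mem_append.1 ha with h | h
      · exact hl a h
      · exact hk a h
  · rw [Submodule.span_le]
    rintro x ⟨l, hl, rfl⟩
    exact PsiComp_mem _ l fun a ha =>
      Algebra.subset_adjoin ⟨a, (hl a ha).1, (hl a ha).2, rfl⟩

theorem adjoin_X_eq (j : ℕ)
    (E : ∀ i : Fin j, Finset (Fin (i.val + 1) × Fin (i.val + 1)))
    (hE : ∀ i, ∀ e ∈ E i, e.1 ≠ e.2)
    (hconn : ∀ i, (arcGraph (E i)).Connected) :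
    Algebra.adjoin ℚ (Set.range fun i : Fin j => XD (E i) inferInstance) =
      Algebra.adjoin ℚ {x : NSym | ∃ m : ℕ, 1 ≤ m ∧ m ≤ j ∧ x = Psi m} := by
  apply le_antisymm
  · apply Algebra.adjoin_le
    rintro _ ⟨i, rfl⟩
    have hP : ∀ a, 1 ≤ a → a ≤ j → Psi a ∈
        Algebra.adjoin ℚ {x : NSym | ∃ m : ℕ, 1 ≤ m ∧ m ≤ j ∧ x = Psi m} :=
      fun a h1 h2 => Algebra.subset_adjoin ⟨a, h1, h2, rfl⟩
    have hi := i.2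
    have h := XD_decomp (E i) inferInstance _
      (fun a h1 h2 => hP a h1 (by rw [Fintype.card_fin] at h2; omega))
    have h2 := add_mem h (Subalgebra.smul_mem _
      (hP (Fintype.card (Fin (i.val + 1))) (by simp) (by rw [Fintype.card_fin]; omega)) (FF ⊥ (E i)))
    rwa [sub_add_cancel] at h2
  · apply Algebra.adjoin_le
    rintro _ ⟨m, h1, h2, rfl⟩
    induction m using Nat.strong_induction_on with
    | _ m ih =>
      obtain ⟨n, rfl⟩ : ∃ n, m = n + 1 := ⟨m - 1, by omega⟩
      set i : Fin j := ⟨n, h2⟩ with hi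
      have h := XD_decomp (E i) inferInstance _
        (fun a ha1 ha2 => ih a (by simpa [hi] using ha2) ha1
          (by rw [Fintype.card_fin] at ha2; have := i.2; omega))
      have hX : XD (E i) inferInstance ∈
          Algebra.adjoin ℚ (Set.range fun i : Fin j => XD (E i) inferInstance) :=
        Algebra.subset_adjoin ⟨i, rfl⟩
      have h3 := sub_mem hX h
      rw [sub_sub_cancel] at h3
      have h4 := Subalgebra.smul_mem _ h3 (FF ⊥ (E i))⁻¹
      rw [smul_smul, inv_mul_cancel₀ (FF_ne_zero (E i) (hE i) (hconn i)), one_smul,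
        Fintype.card_fin] at h4
      exact h4

/-- Let `j ≥ 1` and let `D_1, …, D_j` be digraphs such that `D_i` has
exactly `i` vertices and the undirected graph underlying each `D_i` is connected (here,
for `i : Fin j`, the digraph `D_{i+1}` has vertex set `Fin (i+1)` and arc set `E i`).
Then the `ℚ`-subalgebra of `NSym` generated by `X_{D_1}, …, X_{D_j}` equals the
`ℚ`-linear span of `{Ψ_α : α a composition all of whose parts are ≤ j}` (including
`Ψ_{()} = 1`); in particular it equals the `ℚ`-subalgebra generated by
`Ψ_1, Ψ_2, …, Ψ_j`. -/
theorem adjoin_chromatic_eq_span_Psi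
    (j : ℕ) (hj : 1 ≤ j)
    (E : ∀ i : Fin j, Finset (Fin (i.val + 1) × Fin (i.val + 1)))
    (hE : ∀ i, ∀ e ∈ E i, e.1 ≠ e.2)
    (hconn : ∀ i, (arcGraph (E i)).Connected) :
    ((Algebra.adjoin ℚ (Set.range fun i : Fin j => XD (E i) inferInstance) :
        Subalgebra ℚ NSym) : Set NSym) =
      ((Submodule.span ℚ
          {x : NSym | ∃ l : List ℕ, (∀ a ∈ l, 1 ≤ a ∧ a ≤ j) ∧ x = PsiComp l} :
        Submodule ℚ NSym) : Set NSym) ∧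
    Algebra.adjoin ℚ (Set.range fun i : Fin j => XD (E i) inferInstance) =
      Algebra.adjoin ℚ {x : NSym | ∃ m : ℕ, 1 ≤ m ∧ m ≤ j ∧ x = Psi m} := by
  have h := adjoin_X_eq j E hE hconn
  refine ⟨?_, h⟩
  rw [h, ← adjoin_Psi_span]
  rfl

end
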